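/- arXiv:1306.3276 — 2 statements merged into one kernel-verified Lean document; each statement's English description precedes it below -/
import Mathlib

section
/- (Second derivative formula in the proof of Proposition 4.4.) For every even integer p > 2 and all v, w₁, w₂ ∈ Lp(E, p, μ), the function (s, t) ↦ f(v + s·w₁ + t·w₂) has mixed second partial derivative at (s, t) = (0, 0) equal to D_{w₁}D_{w₂} f(v) = ∫_α [ p ‖v(a)‖^{p−2} ⟨w₁(a), w₂(a)⟩ + p(p−2) ‖v(a)‖^{p−4} ⟨v(a), w₁(a)⟩ ⟨v(a), w₂(a)⟩ ] dμ(a), where for p = 4 the second summand of the integrand is interpreted as 0 at points a with v(a) = 0. -/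
/-! Differentiate twice under the integral sign. Pointwise, `‖x‖ ^ p` has gradient
`p • ‖x‖ ^ (p - 2) • x`, and the field `‖x‖ ^ r • x` is differentiable everywhere for `0 ≤ r`, with
derivative of norm at most `(1 + r) * ‖x‖ ^ r`. Hence along the segment `u + t • w`, `|t| < 1`, both
derivatives are dominated by a multiple of the `p`-th power of a sum of norms of `L^p` functions. -/

open MeasureTheory
open scoped ENNReal RealInnerProductSpace

section Pointwise

variable {E : Type*} [NormedAddCommGroup E] [InnerProductSpace ℝ E]

theorem hasFDerivAt_norm_rpow_of_ne_zero {x : E} (hx : x ≠ 0) (r : ℝ) :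
    HasFDerivAt (fun y : E ↦ ‖y‖ ^ r) ((r * ‖x‖ ^ (r - 2)) • innerSL ℝ x) x := by
  have hasStrictFDerivAt_sq_rpow :=
    (hasStrictFDerivAt_norm_sq x).rpow_const (p := r / 2) (.inl (by simp [hx]))
  convert! hasStrictFDerivAt_sq_rpow.hasFDerivAt using 0
  simp_rw [← Real.rpow_natCast_mul (norm_nonneg _), ← Nat.cast_smul_eq_nsmul ℝ, smul_smul]
  ring_nf

/-- The derivative at `x` of the vector field `y ↦ ‖y‖ ^ r • y`, for `0 ≤ r`. If `r < 2`, then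
`0 ^ (r - 2)` is a junk value, but at `x = 0` it multiplies the zero operator. -/
noncomputable def normRpowSMulFDeriv (r : ℝ) (x : E) : E →L[ℝ] E :=
  ‖x‖ ^ r • ContinuousLinearMap.id ℝ E + (r * ‖x‖ ^ (r - 2)) • InnerProductSpace.rankOne ℝ x x

theorem inner_normRpowSMulFDeriv_apply (r : ℝ) (x y z : E) :
    ⟪normRpowSMulFDeriv r x y, z⟫ =
      ‖x‖ ^ r * ⟪y, z⟫ + r * ‖x‖ ^ (r - 2) * ⟪x, y⟫ * ⟪x, z⟫ := by
  simp [normRpowSMulFDeriv, inner_add_left, real_inner_smul_left, mul_assoc]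

theorem hasFDerivAt_norm_rpow_smul {r : ℝ} (hr : 0 ≤ r) (x : E) :
    HasFDerivAt (fun y : E ↦ ‖y‖ ^ r • y) (normRpowSMulFDeriv r x) x := by
  rcases hr.eq_or_lt with rfl | hr
  · simpa [normRpowSMulFDeriv, Function.id_def] using hasFDerivAt_id x
  rcases eq_or_ne x 0 with rfl | hx
  · have tendsto_norm_rpow : Filter.Tendsto (fun y : E ↦ ‖y‖ ^ r) (nhds 0) (nhds 0) := by
      simpa [hr.ne'] using (continuous_norm.rpow_const fun _ ↦ .inr hr.le).tendsto (0 : E)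
    refine .of_isLittleO ?_
    simpa [normRpowSMulFDeriv, hr.ne'] using
      ((Asymptotics.isLittleO_one_iff ℝ).2 tendsto_norm_rpow).smul_isBigO
        (Asymptotics.isBigO_refl (fun y : E ↦ y) (nhds 0))
  · refine ((hasFDerivAt_norm_rpow_of_ne_zero hx r).smul (hasFDerivAt_id x)).congr_fderiv ?_
    ext y
    simp [normRpowSMulFDeriv, smul_smul]

theorem norm_normRpowSMulFDeriv_le {r : ℝ} (hr : 0 ≤ r) (x : E) :
    ‖normRpowSMulFDeriv r x‖ ≤ (1 + r) * ‖x‖ ^ r := by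
  have norm_id_le : ‖‖x‖ ^ r • ContinuousLinearMap.id ℝ E‖ ≤ ‖x‖ ^ r := by
    rw [norm_smul, Real.norm_of_nonneg (by positivity)]
    exact mul_le_of_le_one_right (by positivity) ContinuousLinearMap.norm_id_le
  have norm_rankOne_eq :
      ‖(r * ‖x‖ ^ (r - 2)) • InnerProductSpace.rankOne ℝ x x‖ = r * ‖x‖ ^ r := by
    rw [norm_smul, InnerProductSpace.norm_rankOne, Real.norm_of_nonneg (by positivity)]
    rcases eq_or_ne x 0 with rfl | hx
    · rcases hr.eq_or_lt with rfl | hr <;> simp [*, ne_of_gt]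
    · rw [Real.rpow_sub (norm_pos_iff.2 hx), Real.rpow_two]
      field_simp
  calc ‖normRpowSMulFDeriv r x‖ ≤ ‖x‖ ^ r + r * ‖x‖ ^ r :=
        (norm_add_le _ _).trans (add_le_add norm_id_le norm_rankOne_eq.le)
    _ = (1 + r) * ‖x‖ ^ r := by ring

theorem norm_inner_norm_rpow_smul_le {r : ℝ} (hr : -1 < r) {x y : E} {M : ℝ} (hx : ‖x‖ ≤ M)
    (hy : ‖y‖ ≤ M) : ‖⟪‖x‖ ^ r • x, y⟫‖ ≤ M ^ (r + 2) := by
  have hM : 0 ≤ M := (norm_nonneg x).trans hx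
  calc ‖⟪‖x‖ ^ r • x, y⟫‖
      ≤ ‖x‖ ^ r * ‖x‖ * ‖y‖ := by
        simpa [norm_smul, Real.abs_rpow_of_nonneg] using norm_inner_le_norm (𝕜 := ℝ) (‖x‖ ^ r • x) y
    _ = ‖x‖ ^ (r + 1) * ‖y‖ := by rw [Real.rpow_add_one' (norm_nonneg x) (by linarith)]
    _ ≤ M ^ (r + 1) * M := by gcongr; linarith
    _ = M ^ (r + 2) := by
        rw [← Real.rpow_add_one' hM (by linarith)]
        ring_nf

theorem norm_inner_normRpowSMulFDeriv_le {r : ℝ} (hr : 0 ≤ r) {x y z : E} {M : ℝ}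
    (hx : ‖x‖ ≤ M) (hy : ‖y‖ ≤ M) (hz : ‖z‖ ≤ M) :
    ‖⟪normRpowSMulFDeriv r x y, z⟫‖ ≤ (1 + r) * M ^ (r + 2) := by
  have hM : 0 ≤ M := (norm_nonneg x).trans hx
  calc ‖⟪normRpowSMulFDeriv r x y, z⟫‖
      ≤ ‖normRpowSMulFDeriv r x‖ * ‖y‖ * ‖z‖ :=
        (norm_inner_le_norm _ _).trans (by gcongr; exact ContinuousLinearMap.le_opNorm _ _)
    _ ≤ (1 + r) * ‖x‖ ^ r * ‖y‖ * ‖z‖ := by gcongr; exact norm_normRpowSMulFDeriv_le hr x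
    _ ≤ (1 + r) * M ^ r * M * M := by gcongr
    _ = (1 + r) * M ^ (r + 2) := by
        rw [Real.rpow_add' hM (by linarith), Real.rpow_two]
        ring

end Pointwise

section Integral

variable {α : Type*} [MeasurableSpace α] {μ : Measure α}

theorem hasDerivAt_integral_comp_add_smul {E F : Type*} [NormedAddCommGroup E] [NormedSpace ℝ E]
    [NormedAddCommGroup F] [NormedSpace ℝ F] {g : α → E → F} {g' : α → E → E →L[ℝ] F}
    {u w : α → E} {bound : α → ℝ} (hg : ∀ a x, HasFDerivAt (g a) (g' a x) x)
    (g_meas : ∀ t : ℝ, AEStronglyMeasurable (fun a ↦ g a (u a + t • w a)) μ)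
    (g_int : Integrable (fun a ↦ g a (u a)) μ)
    (g'_meas : AEStronglyMeasurable (fun a ↦ g' a (u a) (w a)) μ)
    (g'_le : ∀ a x, ‖x‖ ≤ ‖u a‖ + ‖w a‖ → ‖g' a x (w a)‖ ≤ bound a)
    (bound_int : Integrable bound μ) :
    HasDerivAt (fun t : ℝ ↦ ∫ a, g a (u a + t • w a) ∂μ) (∫ a, g' a (u a) (w a) ∂μ) 0 := by
  have norm_add_smul_le (a : α) {t : ℝ} (ht : t ∈ Metric.ball (0 : ℝ) 1) :
      ‖u a + t • w a‖ ≤ ‖u a‖ + ‖w a‖ := by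
    refine (norm_add_le _ _).trans (add_le_add_right ?_ _)
    rw [norm_smul]
    exact mul_le_of_le_one_left (norm_nonneg _) (mem_ball_zero_iff.1 ht).le
  have hasDerivAt_line (a : α) (t : ℝ) : HasDerivAt (fun t : ℝ ↦ u a + t • w a) (w a) t := by
    simpa using ((hasDerivAt_id t).smul_const (w a)).const_add (u a)
  have deriv_under_integral := (hasDerivAt_integral_of_dominated_loc_of_deriv_le
    (F := fun t a ↦ g a (u a + t • w a)) (F' := fun t a ↦ g' a (u a + t • w a) (w a))
    (Metric.ball_mem_nhds (0 : ℝ) one_pos) (.of_forall g_meas) (by simpa using g_int)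
    (by simpa using g'_meas)
    (ae_of_all _ fun a t ht ↦ g'_le a _ (norm_add_smul_le a ht)) bound_int
    (ae_of_all _ fun a t _ ↦ (hg a _).comp_hasDerivAt t (hasDerivAt_line a t))).2
  simpa using deriv_under_integral

theorem aestronglyMeasurable_norm_rpow {F : Type*} [NormedAddCommGroup F] {f : α → F}
    (hf : AEStronglyMeasurable f μ) (r : ℝ) : AEStronglyMeasurable (fun a ↦ ‖f a‖ ^ r) μ :=
  (hf.norm.aemeasurable.pow_const r).aestronglyMeasurable

theorem aestronglyMeasurable_norm_rpow_smul {E : Type*} [NormedAddCommGroup E] [NormedSpace ℝ E]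
    {u : α → E} (hu : AEStronglyMeasurable u μ) (r : ℝ) :
    AEStronglyMeasurable (fun a ↦ ‖u a‖ ^ r • u a) μ :=
  (aestronglyMeasurable_norm_rpow hu r).smul hu

variable {E : Type*} [NormedAddCommGroup E] [InnerProductSpace ℝ E]

theorem aestronglyMeasurable_normRpowSMulFDeriv_apply {u w : α → E}
    (hu : AEStronglyMeasurable u μ) (hw : AEStronglyMeasurable w μ) (r : ℝ) :
    AEStronglyMeasurable (fun a ↦ normRpowSMulFDeriv r (u a) (w a)) μ :=
  ((aestronglyMeasurable_norm_rpow hu r).smul hw).add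
    (((aestronglyMeasurable_norm_rpow hu (r - 2)).const_mul r).smul ((hu.inner hw).smul hu))

variable {p : ℝ≥0∞}

theorem hasDerivAt_integral_norm_add_smul_rpow (hp : 1 < p) (hp_top : p ≠ ∞) {u w : α → E}
    (hu : MemLp u p μ) (hw : MemLp w p μ) :
    HasDerivAt (fun t : ℝ ↦ ∫ a, ‖u a + t • w a‖ ^ p.toReal ∂μ)
      (∫ a, p.toReal * ⟪‖u a‖ ^ (p.toReal - 2) • u a, w a⟫ ∂μ) 0 := by
  have hp₀ : p ≠ 0 := (zero_lt_one.trans hp).ne'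
  have one_lt_toReal : 1 < p.toReal := by
    simpa using (ENNReal.toReal_lt_toReal ENNReal.one_ne_top hp_top).2 hp
  refine hasDerivAt_integral_comp_add_smul (g := fun _ x ↦ ‖x‖ ^ p.toReal)
    (g' := fun _ x ↦ p.toReal • innerSL ℝ (‖x‖ ^ (p.toReal - 2) • x))
    (bound := fun a ↦ p.toReal * ‖‖u a‖ + ‖w a‖‖ ^ p.toReal)
    (fun a x ↦ ?_) (fun t ↦ ?_) (hu.integrable_norm_rpow hp₀ hp_top) ?_ (fun a x hx ↦ ?_)
    (((hu.norm.add hw.norm).integrable_norm_rpow hp₀ hp_top).const_mul _)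
  · simpa [smul_smul] using hasFDerivAt_norm_rpow x one_lt_toReal
  · exact aestronglyMeasurable_norm_rpow (hu.1.add (hw.1.const_smul t)) _
  · exact ((aestronglyMeasurable_norm_rpow_smul hu.1 _).inner hw.1).const_mul _
  · have inner_le := norm_inner_norm_rpow_smul_le (r := p.toReal - 2) (by linarith)
      (hx.trans (le_abs_self _)) ((le_add_of_nonneg_left (norm_nonneg (u a))).trans (le_abs_self _))
    rw [sub_add_cancel] at inner_le
    simpa [abs_mul, real_inner_smul_left] using mul_le_mul_of_nonneg_left inner_le p.toReal_nonneg

theorem hasDerivAt_integral_inner_norm_rpow_smul (hp : 2 ≤ p) (hp_top : p ≠ ∞)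
    {u w z : α → E} (hu : MemLp u p μ) (hw : MemLp w p μ) (hz : MemLp z p μ) :
    HasDerivAt
      (fun t : ℝ ↦ ∫ a, ⟪‖u a + t • w a‖ ^ (p.toReal - 2) • (u a + t • w a), z a⟫ ∂μ)
      (∫ a, ⟪normRpowSMulFDeriv (p.toReal - 2) (u a) (w a), z a⟫ ∂μ) 0 := by
  have hp₀ : p ≠ 0 := (zero_lt_two.trans_le hp).ne'
  have exponent_nonneg : 0 ≤ p.toReal - 2 := by
    simpa using (ENNReal.toReal_le_toReal ENNReal.ofNat_ne_top hp_top).2 hp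
  let M (a : α) : ℝ := ‖‖u a‖ + ‖w a‖ + ‖z a‖‖
  have add_norm_le (a : α) : ‖u a‖ + ‖w a‖ + ‖z a‖ ≤ M a := le_abs_self _
  have hw_le (a : α) : ‖w a‖ ≤ M a := by
    linarith [add_norm_le a, norm_nonneg (u a), norm_nonneg (z a)]
  have hz_le (a : α) : ‖z a‖ ≤ M a := by
    linarith [add_norm_le a, norm_nonneg (u a), norm_nonneg (w a)]
  have le_of_le_add (a : α) (x : E) (hx : ‖x‖ ≤ ‖u a‖ + ‖w a‖) : ‖x‖ ≤ M a := by
    linarith [add_norm_le a, norm_nonneg (z a)]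
  have M_rpow_int : Integrable (fun a ↦ M a ^ (p.toReal - 2 + 2)) μ := by
    rw [sub_add_cancel]
    exact ((hu.norm.add hw.norm).add hz.norm).integrable_norm_rpow hp₀ hp_top
  refine hasDerivAt_integral_comp_add_smul
    (g := fun a x ↦ ⟪‖x‖ ^ (p.toReal - 2) • x, z a⟫)
    (g' := fun a x ↦ innerSLFlip ℝ (z a) ∘L normRpowSMulFDeriv (p.toReal - 2) x)
    (fun a x ↦ (innerSLFlip ℝ (z a)).hasFDerivAt.comp x
      (hasFDerivAt_norm_rpow_smul exponent_nonneg x))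
    (fun t ↦ ?_) (M_rpow_int.mono' ?_ (ae_of_all _ fun a ↦ ?_)) ?_
    (fun a x hx ↦ ?_) (M_rpow_int.const_mul (1 + (p.toReal - 2)))
  · exact (aestronglyMeasurable_norm_rpow_smul (hu.1.add (hw.1.const_smul t)) _).inner hz.1
  · exact (aestronglyMeasurable_norm_rpow_smul hu.1 _).inner hz.1
  · exact norm_inner_norm_rpow_smul_le (by linarith)
      (le_of_le_add a _ (le_add_of_nonneg_right (norm_nonneg _))) (hz_le a)
  · exact (aestronglyMeasurable_normRpowSMulFDeriv_apply hu.1 hw.1 _).inner hz.1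
  · exact norm_inner_normRpowSMulFDeriv_le exponent_nonneg (le_of_le_add a x hx) (hw_le a) (hz_le a)

/-- For `p < 4` the junk value of `‖v a‖ ^ (p - 4)` at `v a = 0` is multiplied by vanishing inner
products. -/
theorem second_derivative_formula_general (hp : 2 ≤ p) (hp_top : p ≠ ∞) (v w₁ w₂ : Lp E p μ) :
    HasDerivAt
      (fun s : ℝ ↦ deriv (fun t : ℝ ↦ ∫ a, ‖(v + s • w₁ + t • w₂) a‖ ^ p.toReal ∂μ) 0)
      (∫ a, p.toReal * ‖v a‖ ^ (p.toReal - 2) * ⟪w₁ a, w₂ a⟫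
          + p.toReal * (p.toReal - 2) * ‖v a‖ ^ (p.toReal - 4) * ⟪v a, w₁ a⟫ * ⟪v a, w₂ a⟫ ∂μ)
      0 := by
  have coeFn_line (s t : ℝ) :
      ∀ᵐ a ∂μ, (v + s • w₁ + t • w₂) a = v a + s • w₁ a + t • w₂ a := by
    filter_upwards [Lp.coeFn_add (v + s • w₁) (t • w₂), Lp.coeFn_add v (s • w₁),
      Lp.coeFn_smul s w₁, Lp.coeFn_smul t w₂] with a h₁ h₂ h₃ h₄
    simp only [h₁, h₂, h₃, h₄, Pi.add_apply, Pi.smul_apply]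
  have first_deriv (s : ℝ) :
      deriv (fun t : ℝ ↦ ∫ a, ‖(v + s • w₁ + t • w₂) a‖ ^ p.toReal ∂μ) 0 =
        p.toReal * ∫ a, ⟪‖v a + s • w₁ a‖ ^ (p.toReal - 2) • (v a + s • w₁ a), w₂ a⟫ ∂μ := by
    rw [← integral_const_mul]
    refine (HasDerivAt.congr_of_eventuallyEq (hasDerivAt_integral_norm_add_smul_rpow
      (ENNReal.one_lt_two.trans_le hp) hp_top
      ((Lp.memLp v).add ((Lp.memLp w₁).const_smul s)) (Lp.memLp w₂)) (.of_forall fun t ↦ ?_)).deriv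
    exact integral_congr_ae ((coeFn_line s t).mono fun a ha ↦ congrArg (‖·‖ ^ p.toReal) ha)
  simp only [first_deriv]
  refine ((hasDerivAt_integral_inner_norm_rpow_smul hp hp_top (Lp.memLp v) (Lp.memLp w₁)
    (Lp.memLp w₂)).const_mul p.toReal).congr_deriv ?_
  rw [← integral_const_mul]
  refine integral_congr_ae (ae_of_all _ fun a ↦ ?_)
  simp only [inner_normRpowSMulFDeriv_apply, sub_sub]
  ring_nf

end Integral

/-- Second derivative formula in the proof of Proposition 4.4: for an even integer `p > 2`
and `v, w₁, w₂ ∈ L^p(α, μ; E)`, the function `(s, t) ↦ f(v + s • w₁ + t • w₂)` has mixed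
second partial derivative at `(0, 0)` equal to
`D_{w₁}D_{w₂} f(v) = ∫ [ p ‖v‖^{p-2} ⟪w₁, w₂⟫ + p(p-2) ‖v‖^{p-4} ⟪v, w₁⟫ ⟪v, w₂⟫ ] dμ`
(for `p = 4` the second summand of the integrand vanishes where `v(a) = 0`, since the inner
products `⟪v(a), wᵢ(a)⟫` vanish there; the `ℕ`-power `‖v(a)‖^{p-4} = 0^0 = 1` convention
realizes this interpretation). -/
theorem second_derivative_formula
    {α : Type*} [MeasurableSpace α] (μ : Measure α)
    {E : Type*} [NormedAddCommGroup E] [InnerProductSpace ℝ E] [FiniteDimensional ℝ E]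
    (p : ℕ) (hp : 2 < p) (hpe : Even p) [Fact (1 ≤ (p : ℝ≥0∞))]
    (v w₁ w₂ : Lp E (p : ℝ≥0∞) μ) :
    HasDerivAt
      (fun s : ℝ =>
        deriv (fun t : ℝ => ∫ a, ‖(v + s • w₁ + t • w₂) a‖ ^ p ∂μ) 0)
      (∫ a, (p : ℝ) * ‖v a‖ ^ (p - 2) * ⟪w₁ a, w₂ a⟫
          + (p : ℝ) * ((p : ℝ) - 2) * ‖v a‖ ^ (p - 4) * ⟪v a, w₁ a⟫ * ⟪v a, w₂ a⟫ ∂μ)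
      0 := by
  have h4 : 4 ≤ p := by grind
  simpa [← Real.rpow_natCast, Nat.cast_sub hp.le, Nat.cast_sub h4] using
    second_derivative_formula_general (by exact_mod_cast hp.le) (ENNReal.natCast_ne_top p) v w₁ w₂
end

section
/- (Existence of smooth cut-off functions, Remark 4.5; this fulfils Assumption 3.1/3.6 for the local stabilizations.) For every even integer p > 2 and every ε > 0, there exists an infinitely Fréchet differentiable function β : Lp(E, p, μ) → ℝ with values in [0, 1] such that β(v) = 1 whenever ‖v‖_{Lp} < ε/3 and β(v) = 0 whenever ‖v‖_{Lp} > 2ε/3. -/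
open MeasureTheory
open scoped ENNReal

/-!
For `p = 2m`, the map `v ↦ ‖v‖ ^ p = ∫ (|v|²) ^ m` is polynomial on `L^p`: Hölder's inequality makes
`v ↦ |v|²` a bounded quadratic map `L^p → L^m`, and makes `w ↦ w ^ m` a bounded homogeneous
polynomial `L^m → L^1`. Composing it with a bump function on `ℝ` gives the cut-off. The composition
is smooth even though the norm itself is not differentiable at the origin.
-/

section Holder

variable {α 𝕜 E F G X : Type*} [MeasurableSpace α] {μ : Measure α} [NontriviallyNormedField 𝕜]
  [NormedAddCommGroup E] [NormedSpace 𝕜 E] [NormedAddCommGroup F] [NormedSpace 𝕜 F]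
  [NormedAddCommGroup G] [NormedSpace 𝕜 G] [NormedAddCommGroup X] [NormedSpace 𝕜 X]
  {p q r : ℝ≥0∞} [ENNReal.HolderTriple p q r] [Fact (1 ≤ p)] [Fact (1 ≤ q)] [Fact (1 ≤ r)]
  {n : WithTop ℕ∞}

lemma contDiff_holder (B : E →L[𝕜] F →L[𝕜] G) {f : X → Lp E p μ} {g : X → Lp F q μ}
    (hf : ContDiff 𝕜 n f) (hg : ContDiff 𝕜 n g) :
    ContDiff 𝕜 n fun x ↦ B.holder r (f x) (g x) :=
  ((B.holderL μ p q r).contDiff.comp hf).clm_apply hg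

end Holder

section LpPow

variable {α A : Type*} [MeasurableSpace α] {μ : Measure α} [NormedRing A] {p q : ℝ≥0∞} {k : ℕ}

lemma holderTriple_of_inv_eq_succ_mul_inv (h : q⁻¹ = (k + 1 : ℕ) * p⁻¹) :
    ENNReal.HolderTriple (k * p⁻¹)⁻¹ p q where
  inv_add_inv_eq_inv := by rw [inv_inv, h, Nat.cast_succ, add_one_mul]

lemma memLp_pow {f : α → A} (hf : MemLp f p μ) (h : q⁻¹ = k * p⁻¹) : MemLp (f ^ k) q μ := by
  induction k generalizing q with
  | zero =>
    obtain rfl : q = ∞ := by simpa using h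
    exact pow_zero f ▸ memLp_top_const (1 : A)
  | succ k ih =>
    have := holderTriple_of_inv_eq_succ_mul_inv h
    exact pow_succ f k ▸ hf.mul (ih (inv_inv _))

/-- The pointwise power `f ↦ f ^ k` as a map `L^p → L^q`, where `q = p / k` is encoded by
`q⁻¹ = k * p⁻¹`; in particular `q = ∞` for `k = 0`. -/
noncomputable def lpPow (k : ℕ) (h : q⁻¹ = k * p⁻¹) (f : Lp A p μ) : Lp A q μ :=
  (memLp_pow (Lp.memLp f) h).toLp

lemma coeFn_lpPow (h : q⁻¹ = k * p⁻¹) (f : Lp A p μ) : lpPow k h f =ᵐ[μ] ⇑f ^ k :=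
  MemLp.coeFn_toLp _

variable {𝕜 : Type*} [NontriviallyNormedField 𝕜] [NormedAlgebra 𝕜 A]

variable (𝕜) in
lemma lpPow_succ (h : q⁻¹ = (k + 1 : ℕ) * p⁻¹) (f : Lp A p μ) :
    haveI := holderTriple_of_inv_eq_succ_mul_inv h
    lpPow (k + 1) h f =
      (ContinuousLinearMap.mul 𝕜 A).holder q (lpPow k (inv_inv (k * p⁻¹)) f) f := by
  have := holderTriple_of_inv_eq_succ_mul_inv h
  refine MemLp.toLp_congr _ _ ?_
  filter_upwards [coeFn_lpPow (inv_inv (k * p⁻¹)) f] with x hx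
  simp [hx, pow_succ]

lemma contDiff_lpPow [Fact (1 ≤ p)] [hq : Fact (1 ≤ q)] {n : WithTop ℕ∞} (h : q⁻¹ = k * p⁻¹) :
    ContDiff 𝕜 n (lpPow k h : Lp A p μ → Lp A q μ) := by
  induction k generalizing q with
  | zero =>
    have hconst (f : Lp A p μ) : lpPow 0 h f = lpPow 0 h 0 :=
      MemLp.toLp_congr _ _ (.of_forall fun x ↦ by simp)
    exact funext hconst ▸ contDiff_const
  | succ k ih =>
    have := holderTriple_of_inv_eq_succ_mul_inv h
    have : Fact (1 ≤ (k * p⁻¹)⁻¹) := ⟨hq.out.trans (ENNReal.HolderTriple.le _ p q)⟩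
    rw [funext (lpPow_succ 𝕜 h)]
    exact contDiff_holder _ (ih _) contDiff_id

end LpPow

section NormPow

variable {α E : Type*} [MeasurableSpace α] {μ : Measure α} [NormedAddCommGroup E]

lemma norm_lp_pow_eq_integral {p : ℕ} (hp : p ≠ 0) (v : Lp E (p : ℝ≥0∞) μ) :
    ‖v‖ ^ p = ∫ x, ‖v x‖ ^ p ∂μ := by
  have hroot : ‖v‖ = (∫ x, ‖v x‖ ^ p ∂μ) ^ (p⁻¹ : ℝ) := by
    simpa [Lp.norm_def, toReal_eLpNorm (Lp.aestronglyMeasurable v)] using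
      lpNorm_eq_integral_norm_rpow_toReal (Nat.cast_ne_zero.2 hp) (ENNReal.natCast_ne_top p)
        (Lp.aestronglyMeasurable v)
  rw [hroot, Real.rpow_inv_natCast_pow (integral_nonneg fun x ↦ by positivity) hp]

lemma holderTriple_two_mul_self (r : ℝ≥0∞) : ENNReal.HolderTriple (2 * r) (2 * r) r where
  inv_add_inv_eq_inv := by
    rw [ENNReal.mul_inv (by simp) (by simp), ← add_mul, ENNReal.inv_two_add_inv_two, one_mul]

variable [InnerProductSpace ℝ E]

section NormSq

variable {p : ℝ≥0∞} (q : ℝ≥0∞) [ENNReal.HolderTriple p p q]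

/-- The pointwise squared norm `v ↦ |v|²` as a map `L^p → L^q`, where `q = p / 2` is encoded by the
Hölder relation `p⁻¹ + p⁻¹ = q⁻¹`. -/
noncomputable def lpNormSq (v : Lp E p μ) : Lp ℝ q μ := (innerSL ℝ).holder q v v

lemma coeFn_lpNormSq (v : Lp E p μ) : lpNormSq q v =ᵐ[μ] fun x ↦ ‖v x‖ ^ 2 := by
  filter_upwards [(innerSL ℝ).coeFn_holder (r := q) v v] with x hx
  rw [lpNormSq, hx, innerSL_apply_apply, real_inner_self_eq_norm_sq]

lemma contDiff_lpNormSq [Fact (1 ≤ p)] [Fact (1 ≤ q)] {n : WithTop ℕ∞} :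
    ContDiff ℝ n (lpNormSq q : Lp E p μ → Lp ℝ q μ) :=
  contDiff_holder (innerSL ℝ) contDiff_id contDiff_id

end NormSq

lemma contDiff_norm_lp_pow {p : ℕ} (hpe : Even p) [hp : Fact (1 ≤ (p : ℝ≥0∞))]
    {n : WithTop ℕ∞} : ContDiff ℝ n fun v : Lp E (p : ℝ≥0∞) μ ↦ ‖v‖ ^ p := by
  have hp1 : 1 ≤ p := Nat.one_le_cast.1 hp.out
  obtain ⟨m, rfl⟩ := even_iff_exists_two_mul.1 hpe
  have hm1 : 1 ≤ m := by lia
  have : Fact (1 ≤ (m : ℝ≥0∞)) := ⟨Nat.one_le_cast.2 hm1⟩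
  have : ENNReal.HolderTriple (2 * m : ℕ) (2 * m : ℕ) m := by
    simpa only [Nat.cast_mul, Nat.cast_ofNat] using holderTriple_two_mul_self m
  have hmul_inv : (1 : ℝ≥0∞)⁻¹ = m * (m : ℝ≥0∞)⁻¹ := by
    rw [ENNReal.mul_inv_cancel (Nat.cast_ne_zero.2 (by lia)) (ENNReal.natCast_ne_top m), inv_one]
  have hnorm_pow (v : Lp E (2 * m : ℕ) μ) :
      ‖v‖ ^ (2 * m) = L1.integralCLM (lpPow m hmul_inv (lpNormSq m v)) := by
    rw [← L1.integral_eq, L1.integral_eq_integral, norm_lp_pow_eq_integral (by lia)]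
    refine integral_congr_ae ?_
    filter_upwards [coeFn_lpPow hmul_inv (lpNormSq m v), coeFn_lpNormSq m v] with x hpow hsq
    rw [hpow, Pi.pow_apply, hsq, pow_mul]
  have hintegral_pow : ContDiff ℝ n fun w : Lp ℝ m μ ↦ L1.integralCLM (lpPow m hmul_inv w) :=
    L1.integralCLM.contDiff.comp (contDiff_lpPow hmul_inv)
  rw [funext hnorm_pow]
  exact hintegral_pow.comp (contDiff_lpNormSq m)

end NormPow

lemma exists_contDiff_cutoff_of_contDiff_norm_pow {F : Type*} [NormedAddCommGroup F]
    [NormedSpace ℝ F] {p : ℕ} (hp : p ≠ 0) {n : ℕ∞} (h : ContDiff ℝ n fun v : F ↦ ‖v‖ ^ p)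
    {r R : ℝ} (hr : 0 < r) (hrR : r < R) :
    ∃ β : F → ℝ, ContDiff ℝ n β ∧ (∀ v, β v ∈ Set.Icc (0 : ℝ) 1) ∧
      (∀ v, ‖v‖ ≤ r → β v = 1) ∧ (∀ v, R ≤ ‖v‖ → β v = 0) := by
  let bump : ContDiffBump (0 : ℝ) :=
    ⟨r ^ p, R ^ p, pow_pos hr p, pow_lt_pow_left₀ hrR hr.le hp⟩
  refine ⟨fun v ↦ bump (‖v‖ ^ p), bump.contDiff.comp h, fun v ↦ ⟨bump.nonneg, bump.le_one⟩,
    fun v hv ↦ bump.one_of_mem_closedBall ?_, fun v hv ↦ bump.zero_of_le_dist ?_⟩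
  · simpa [bump] using pow_le_pow_left₀ (norm_nonneg v) hv p
  · simpa [bump] using pow_le_pow_left₀ (hr.trans hrR).le hv p

theorem smooth_cutoff_exists_general {α : Type*} [MeasurableSpace α] (μ : Measure α)
    {E : Type*} [NormedAddCommGroup E] [InnerProductSpace ℝ E]
    {p : ℕ} (hpe : Even p) [hp : Fact (1 ≤ (p : ℝ≥0∞))] {r R : ℝ} (hr : 0 < r) (hrR : r < R) :
    ∃ β : Lp E (p : ℝ≥0∞) μ → ℝ,
      ContDiff ℝ (⊤ : ℕ∞) β ∧
      (∀ v, β v ∈ Set.Icc (0 : ℝ) 1) ∧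
      (∀ v, ‖v‖ ≤ r → β v = 1) ∧
      (∀ v, R ≤ ‖v‖ → β v = 0) :=
  exists_contDiff_cutoff_of_contDiff_norm_pow
    (Nat.one_le_iff_ne_zero.1 (Nat.one_le_cast.1 hp.out)) (contDiff_norm_lp_pow hpe) hr hrR

/-- Existence of smooth cut-off functions (Remark 4.5, fulfilling Assumption 3.1/3.6 for
the local stabilizations): for every even integer `p > 2` and every `ε > 0` there is a
`C^∞` function `β : L^p(α, μ; E) → [0, 1]` with `β ≡ 1` on the open `ε/3`-ball and
`β ≡ 0` outside the closed `2ε/3`-ball. -/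
theorem smooth_cutoff_exists
    {α : Type*} [MeasurableSpace α] (μ : Measure α)
    {E : Type*} [NormedAddCommGroup E] [InnerProductSpace ℝ E] [FiniteDimensional ℝ E]
    (p : ℕ) (hp : 2 < p) (hpe : Even p) [Fact (1 ≤ (p : ℝ≥0∞))]
    (ε : ℝ) (hε : 0 < ε) :
    ∃ β : Lp E (p : ℝ≥0∞) μ → ℝ,
      ContDiff ℝ (⊤ : ℕ∞) β ∧
      (∀ v, β v ∈ Set.Icc (0 : ℝ) 1) ∧
      (∀ v, ‖v‖ < ε / 3 → β v = 1) ∧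
      (∀ v, 2 * ε / 3 < ‖v‖ → β v = 0) := by
  obtain ⟨β, hβ, hβ01, hone, hzero⟩ := smooth_cutoff_exists_general (E := E) μ hpe
    (r := ε / 3) (R := 2 * ε / 3) (by linarith) (by linarith)
  exact ⟨β, hβ, hβ01, fun v hv ↦ hone v hv.le, fun v hv ↦ hzero v hv.le⟩
end
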